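/- Let G be a group, let H ≤ G be a subgroup, let m ≥ 1, and let F ∈ G be such that the subgroups FⁱHF⁻ⁱ, i = 0,1,…,m, pairwise commute elementwise. Then every element x ∈ G that is a product of m commutators [f₁,g₁]⋯[f_m,g_m] with all f_i, g_i ∈ H can be represented as a product of seven F-commutators. -/

import Mathlib

open scoped commutatorElement

/-- An `F`-commutator: an element of the form `f[F,h]f⁻¹`. -/
def IsFCommutator {G : Type*} [Group G] (F x : G) : Prop :=
  ∃ f h : G, x = f * ⁅F, h⁆ * f⁻¹

/-!
Three `F`-commutators suffice. The maps `a ↦ Fⁱ a F⁻ⁱ` have commuting images, so they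
assemble into a homomorphism `Φ : H^(m+1) → G`, and conjugation by `F` turns
`Φ(y₀, …, y_{m-1}, 1)` into `Φ(1, y₀, …, y_{m-1})`. Telescoping then shows that `Φ w` is an
`F`-commutator whenever `w₀ w₁ ⋯ w_m = 1`. With `p = f₁ ⋯ f_m`, both `(p⁻¹, f)` and `(x⁻¹, ⁅f, g⁆)`
have product `1`, so the coordinatewise identity
`(x, 1) = ⁅(p⁻¹, f), (1, g)⁆ * (x⁻¹, ⁅f, g⁆)⁻¹` in `H^(m+1)` gives the claim: a commutator
`⁅u, b⁆ = u * (b u⁻¹ b⁻¹)` is a product of two `F`-commutators if `u` is one.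
-/

section

variable {G : Type*} [Group G] {F : G}

namespace IsFCommutator

variable {x : G}

theorem one (F : G) : IsFCommutator F 1 :=
  ⟨1, 1, by simp⟩

theorem conj (hx : IsFCommutator F x) (a : G) : IsFCommutator F (a * x * a⁻¹) := by
  obtain ⟨f, h, rfl⟩ := hx
  exact ⟨a * f, h, by group⟩

theorem inv (hx : IsFCommutator F x) : IsFCommutator F x⁻¹ := by
  obtain ⟨f, h, rfl⟩ := hx
  exact ⟨f * h, h⁻¹, by simp only [commutatorElement_def]; group⟩

theorem exists_prod_ofFn_add {n : ℕ} {c : Fin n → G} (hc : ∀ i, IsFCommutator F (c i)) (k : ℕ) :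
    ∃ d : Fin (n + k) → G,
      (∀ i, IsFCommutator F (d i)) ∧ (List.ofFn c).prod = (List.ofFn d).prod := by
  refine ⟨Fin.append c (fun _ => 1), fun i => ?_, ?_⟩
  · cases i using Fin.addCases with
    | left i => simpa only [Fin.append_left] using hc i
    | right i => simpa only [Fin.append_right] using one F
  · simp [List.ofFn_fin_append]

end IsFCommutator

theorem noncommPiCoprod_apply_eq_prod_ofFn {M : Type*} [Monoid M] {n : ℕ} {N : Fin n → Type*}
    [∀ i, Monoid (N i)] (φ : ∀ i, N i →* M)
    (hφ : Pairwise fun i j => ∀ a b, Commute (φ i a) (φ j b)) (y : ∀ i, N i) :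
    MonoidHom.noncommPiCoprod φ hφ y = (List.ofFn fun i => φ i (y i)).prod := by
  rw [List.ofFn_eq_map, ← Finset.noncommProd_toFinset (List.finRange n) _
    (fun _ _ _ _ h => hφ h _ _) (List.nodup_finRange n)]
  simp only [List.toFinset_finRange]
  rfl

theorem cons_one_eq_commutator_mul_inv {K : Type*} [Group K] {n : ℕ} (x p : K)
    (f g : Fin n → K) :
    (Fin.cons x 1 : Fin (n + 1) → K) =
      ⁅(Fin.cons p f : Fin (n + 1) → K), (Fin.cons 1 g : Fin (n + 1) → K)⁆ *
        (Fin.cons x⁻¹ ⁅f, g⁆ : Fin (n + 1) → K)⁻¹ := by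
  funext i
  cases i using Fin.cases <;> simp [commutatorElement_def]

/-- `F` displaces `H` `m` times: the conjugates `FⁱHF⁻ⁱ`, `0 ≤ i ≤ m`, commute pairwise. This makes
the ordered product of their elements multiplicative, see `Displaces.prodHom`. -/
def Displaces (F : G) (m : ℕ) (H : Subgroup G) : Prop :=
  ∀ i j : ℕ, i ≤ m → j ≤ m → i ≠ j →
    ∀ a ∈ H, ∀ b ∈ H, Commute (F ^ i * a * (F ^ i)⁻¹) (F ^ j * b * (F ^ j)⁻¹)

namespace Displaces

variable {m : ℕ} {H : Subgroup G}

/-- The homomorphism `Φ(y₀, …, y_m) = ∏ᵢ Fⁱ yᵢ F⁻ⁱ`, through which computations with the commuting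
conjugates of `H` become coordinatewise ones. -/
def prodHom (hd : Displaces F m H) : (Fin (m + 1) → H) →* G :=
  MonoidHom.noncommPiCoprod
    (fun i => (MulAut.conj (F ^ (i : ℕ))).toMonoidHom.comp H.subtype)
    fun i j hij a b => hd i j i.is_le j.is_le (Fin.val_ne_of_ne hij) a a.2 b b.2

theorem prodHom_apply (hd : Displaces F m H) (y : Fin (m + 1) → H) :
    hd.prodHom y = (List.ofFn fun i => F ^ (i : ℕ) * y i * (F ^ (i : ℕ))⁻¹).prod :=
  noncommPiCoprod_apply_eq_prod_ofFn _ _ y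

theorem prodHom_cons_one (hd : Displaces F m H) (a : H) :
    hd.prodHom (Fin.cons a 1) = a := by
  simp [prodHom_apply, List.ofFn_succ]

theorem conj_prodHom_tail (hd : Displaces F m H) {P : Fin (m + 2) → H}
    (h_zero : P 0 = 1) (h_last : P (Fin.last (m + 1)) = 1) :
    F * hd.prodHom (Fin.tail P) * F⁻¹ = hd.prodHom (Fin.init P) := by
  have shift (i : ℕ) (a : G) :
      F * (F ^ i * a * (F ^ i)⁻¹) * F⁻¹ = F ^ (i + 1) * a * (F ^ (i + 1))⁻¹ := by
    group
  rw [← MulAut.conj_apply, prodHom_apply, prodHom_apply, map_list_prod, List.map_ofFn,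
    List.ofFn_succ_last, List.ofFn_succ]
  simp [Fin.tail, Fin.init, h_zero, h_last, shift]

theorem isFCommutator_prodHom (hd : Displaces F m H) {w : Fin (m + 1) → H}
    (hw : (List.ofFn w).prod = 1) : IsFCommutator F (hd.prodHom w) := by
  set P : Fin (m + 2) → H := (Fin.partialProd w)⁻¹ with hP
  have h_zero : P 0 = 1 := by simp [hP]
  have h_last : P (Fin.last (m + 1)) = 1 := by
    rw [hP, Pi.inv_apply, Fin.partialProd, Fin.val_last, List.take_of_length_le (by simp), hw,
      inv_one]
  have telescope : w = Fin.init P * (Fin.tail P)⁻¹ := by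
    funext i
    simp [hP, Fin.init, Fin.tail, Fin.partialProd_right_inv]
  refine ⟨1, hd.prodHom (Fin.tail P), ?_⟩
  rw [commutatorElement_def, hd.conj_prodHom_tail h_zero h_last, one_mul, inv_one, mul_one,
    ← map_inv, ← map_mul, ← telescope]

theorem isFCommutator_prodHom_cons (hd : Displaces F m H) (c : Fin m → H) :
    IsFCommutator F (hd.prodHom (Fin.cons (List.ofFn c).prod⁻¹ c)) :=
  hd.isFCommutator_prodHom (by simp [List.ofFn_succ])

end Displaces

theorem prod_seven_F_commutators_of_m_displaceable_general {m : ℕ} {H : Subgroup G}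
    (hd : Displaces F m H) (f g : Fin m → G) (hf : ∀ i, f i ∈ H) (hg : ∀ i, g i ∈ H) :
    ∃ c : Fin 3 → G, (∀ i, IsFCommutator F (c i)) ∧
      (List.ofFn fun i => ⁅f i, g i⁆).prod = (List.ofFn c).prod := by
  lift f to Fin m → H using hf
  lift g to Fin m → H using hg
  set x : H := (List.ofFn ⁅f, g⁆).prod with hx
  have coe_x : (List.ofFn fun i => ⁅(f i : G), (g i : G)⁆).prod = x := by
    rw [hx, ← H.coe_subtype, map_list_prod, List.map_ofFn]
    rfl
  set u := hd.prodHom (Fin.cons (List.ofFn f).prod⁻¹ f)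
  set b := hd.prodHom (Fin.cons 1 g)
  set v := hd.prodHom (Fin.cons x⁻¹ ⁅f, g⁆)
  have hu : IsFCommutator F u := hd.isFCommutator_prodHom_cons f
  have hv : IsFCommutator F v := hd.isFCommutator_prodHom_cons ⁅f, g⁆
  have x_eq : (x : G) = ⁅u, b⁆ * v⁻¹ := by
    rw [← hd.prodHom_cons_one, cons_one_eq_commutator_mul_inv x (List.ofFn f).prod⁻¹ f g,
      map_mul, map_commutatorElement, map_inv]
  refine ⟨![u, b * u⁻¹ * b⁻¹, v⁻¹], ?_, ?_⟩
  · simp [Fin.forall_fin_succ, hu, hu.inv.conj b, hv.inv]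
  · rw [coe_x, x_eq, commutatorElement_def]
    simp [mul_assoc]

end

/-- If the conjugates `FⁱHF⁻ⁱ`, `i = 0,…,m`, pairwise commute elementwise, then
any product of `m` commutators of elements of `H` is a product of seven
`F`-commutators. -/
theorem prod_seven_F_commutators_of_m_displaceable {G : Type*} [Group G]
    (H : Subgroup G) (m : ℕ) (hm : 1 ≤ m) (F : G)
    (hd : ∀ i j : ℕ, i ≤ m → j ≤ m → i ≠ j →
      ∀ a ∈ H, ∀ b ∈ H, Commute (F ^ i * a * (F ^ i)⁻¹) (F ^ j * b * (F ^ j)⁻¹))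
    (x : G) (f g : Fin m → G) (hf : ∀ i, f i ∈ H) (hg : ∀ i, g i ∈ H)
    (hx : x = (List.ofFn fun i => ⁅f i, g i⁆).prod) :
    ∃ c : Fin 7 → G, (∀ i, IsFCommutator F (c i)) ∧ x = (List.ofFn c).prod := by
  obtain ⟨c, hc, h_prod⟩ := prod_seven_F_commutators_of_m_displaceable_general hd f g hf hg
  exact (hx.trans h_prod) ▸ IsFCommutator.exists_prod_ofFn_add hc 4
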